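/- If M and H are k×k filter matrices with M ⪰ H, then there exists a function g such that φ_H(x) = g(φ_M(x)) for every realization x of the chain; that is, the chain filtered by H is a function of the chain filtered by M. -/

import Mathlib

open scoped BigOperators Classical

namespace FilteredMarkov

variable {k : ℕ}

/-- Probability of a complete realization `x` of the chain (of length `n+1`,
i.e. with `n` transitions), given the known initial state `s`, under the
transition probabilities `p`. -/
noncomputable def chainProb {n : ℕ} (p : Fin k → Fin k → ℝ) (s : Fin k)
    (x : Fin (n + 1) → Fin k) : ℝ :=
  (if x 0 = s then (1 : ℝ) else 0) * ∏ i : Fin n, p (x i.castSucc) (x i.succ)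

/-- Extension of a finite realization to all of `ℕ` (values beyond the range
are junk, obtained by reducing the index mod `n+1`). -/
def extChain {n : ℕ} (x : Fin (n + 1) → Fin k) : ℕ → Fin k :=
  fun t => x ⟨t % (n + 1), Nat.mod_lt _ (Nat.succ_pos n)⟩

/-- The filtered chain `φ_F(x)`: the state at position `t` is retained if the
transition into it (`f_{x_{t-1}, x_t} = 1`) or out of it (`f_{x_t, x_{t+1}} = 1`)
is recorded by the filter matrix `F`; otherwise it is replaced by a blank (`none`). -/
def phi {n : ℕ} (F : Fin k → Fin k → Bool) (x : Fin (n + 1) → Fin k) :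
    Fin (n + 1) → Option (Fin k) :=
  fun t =>
    if (0 < (t : ℕ) ∧ F (extChain x ((t : ℕ) - 1)) (x t) = true) ∨
        ((t : ℕ) + 1 < n + 1 ∧ F (x t) (extChain x ((t : ℕ) + 1)) = true)
    then some (x t) else none

/-- The probability distribution of the filtered chain `φ_F(X)` (as a probability
mass function on possible filtered sequences), for a chain of length `n+1` with
known initial state `s` and transition probabilities `p`. -/
noncomputable def obsDist (n : ℕ) (p : Fin k → Fin k → ℝ) (s : Fin k)
    (F : Fin k → Fin k → Bool) : (Fin (n + 1) → Option (Fin k)) → ℝ :=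
  fun y => ∑ x : Fin (n + 1) → Fin k, if phi F x = y then chainProb p s x else 0

/-- The parameter space: all the transition probabilities are strictly between
0 and 1 and each row of the transition probability matrix sums to 1. -/
def IsParam (p : Fin k → Fin k → ℝ) : Prop :=
  (∀ i j, 0 < p i j ∧ p i j < 1) ∧ ∀ i, ∑ j, p i j = 1

/-- A filter matrix `F` is identifiable (`F ∈ 𝓘`) if any two distinct values of the
parameter `θ` (the transition probabilities) induce distinct probability
distributions of the filtered chain `φ_F(X)` (for a sufficiently long chain). -/
def Identifiable (k : ℕ) (F : Fin k → Fin k → Bool) : Prop :=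
  ∀ p q : Fin k → Fin k → ℝ, IsParam p → IsParam q → p ≠ q →
    ∃ (n : ℕ) (s : Fin k), obsDist n p s F ≠ obsDist n q s F

/-!
A transition recorded by `H` is also recorded by `M`, so both of its end states survive in `φ_M(x)`.
Hence the transitions recorded by `H` can be read off `φ_M(x)`, and no new ones appear there because
blanks only hide states. The function `g` is therefore filtering by `H` itself, extended to
sequences with blanks: filtering by `M` and then by `H` is the same as filtering by `H`.
-/

section Refilter

variable {α : Type*} {n : ℕ}

/-- The `s`-th transition, from position `s` to position `s + 1`, of a sequence `y` with blanks is
recorded by the filter `F`: both of its end states are visible, and `F` records the pair. -/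
def IsRecorded (F : α → α → Bool) (y : Fin (n + 1) → Option α) (s : Fin n) : Prop :=
  ∃ a ∈ y s.castSucc, ∃ b ∈ y s.succ, F a b = true

/-- The position `t` of a sequence `y` with blanks is an endpoint of a recorded transition, so that
filtering by `F` retains it. -/
def IsRetained (F : α → α → Bool) (y : Fin (n + 1) → Option α) (t : Fin (n + 1)) : Prop :=
  ∃ s : Fin n, IsRecorded F y s ∧ (s.castSucc = t ∨ s.succ = t)

/-- Filtering by `F`, extended from complete realizations to sequences which already contain
blanks, so that filters can be composed. -/
noncomputable def refilter (F : α → α → Bool) (y : Fin (n + 1) → Option α) :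
    Fin (n + 1) → Option α :=
  fun t => if IsRetained F y t then y t else none

variable {F M H : α → α → Bool} {y : Fin (n + 1) → Option α}

theorem mem_refilter {t : Fin (n + 1)} {a : α} :
    a ∈ refilter F y t ↔ IsRetained F y t ∧ a ∈ y t := by
  simp only [refilter, Option.mem_ite_none_right]

theorem IsRecorded.mono (hMH : ∀ i j, H i j = true → M i j = true) {s : Fin n} :
    IsRecorded H y s → IsRecorded M y s :=
  fun ⟨a, ha, b, hb, hab⟩ => ⟨a, ha, b, hb, hMH a b hab⟩

theorem IsRetained.mono (hMH : ∀ i j, H i j = true → M i j = true) {t : Fin (n + 1)} :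
    IsRetained H y t → IsRetained M y t :=
  fun ⟨s, hs, ht⟩ => ⟨s, hs.mono hMH, ht⟩

theorem isRecorded_refilter_iff (hMH : ∀ i j, H i j = true → M i j = true) {s : Fin n} :
    IsRecorded H (refilter M y) s ↔ IsRecorded H y s := by
  constructor
  · rintro ⟨a, ha, b, hb, hab⟩
    exact ⟨a, (mem_refilter.mp ha).2, b, (mem_refilter.mp hb).2, hab⟩
  · intro hs
    have hM : IsRecorded M y s := hs.mono hMH
    obtain ⟨a, ha, b, hb, hab⟩ := hs
    exact ⟨a, mem_refilter.mpr ⟨⟨s, hM, .inl rfl⟩, ha⟩,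
      b, mem_refilter.mpr ⟨⟨s, hM, .inr rfl⟩, hb⟩, hab⟩

theorem isRetained_refilter_iff (hMH : ∀ i j, H i j = true → M i j = true) {t : Fin (n + 1)} :
    IsRetained H (refilter M y) t ↔ IsRetained H y t := by
  simp only [IsRetained, isRecorded_refilter_iff hMH]

theorem refilter_refilter (hMH : ∀ i j, H i j = true → M i j = true)
    (y : Fin (n + 1) → Option α) : refilter H (refilter M y) = refilter H y := by
  ext t a
  change a ∈ refilter H (refilter M y) t ↔ a ∈ refilter H y t
  rw [mem_refilter, mem_refilter, mem_refilter, isRetained_refilter_iff hMH]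
  exact and_congr_right fun ht => and_iff_right (ht.mono hMH)

end Refilter

section Phi

variable {n : ℕ} (F : Fin k → Fin k → Bool) (x : Fin (n + 1) → Fin k)

theorem extChain_val (t : Fin (n + 1)) : extChain x t = x t :=
  congrArg x (Fin.ext (Nat.mod_eq_of_lt t.isLt))

theorem isRecorded_some_comp_iff (s : Fin n) :
    IsRecorded F (some ∘ x) s ↔ F (x s.castSucc) (x s.succ) = true := by
  simp [IsRecorded]

theorem incoming_iff_exists_succ_eq (t : Fin (n + 1)) :
    (0 < (t : ℕ) ∧ F (extChain x ((t : ℕ) - 1)) (x t) = true) ↔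
      ∃ s : Fin n, F (x s.castSucc) (x s.succ) = true ∧ s.succ = t := by
  cases t using Fin.cases with
  | zero => simp
  | succ s => simp [← extChain_val x s.castSucc]

theorem outgoing_iff_exists_castSucc_eq (t : Fin (n + 1)) :
    ((t : ℕ) + 1 < n + 1 ∧ F (x t) (extChain x ((t : ℕ) + 1)) = true) ↔
      ∃ s : Fin n, F (x s.castSucc) (x s.succ) = true ∧ s.castSucc = t := by
  cases t using Fin.lastCases with
  | last => simp
  | cast s => simp [← extChain_val x s.succ]

theorem phi_eq_refilter_some_comp : phi F x = refilter F (some ∘ x) := by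
  funext t
  refine if_congr ?_ rfl rfl
  rw [incoming_iff_exists_succ_eq, outgoing_iff_exists_castSucc_eq, or_comm, ← exists_or]
  simp only [IsRetained, isRecorded_some_comp_iff, and_or_left]

end Phi

/-- If `M` and `H` are `k × k` filter matrices with `M ⪰ H` (i.e. `h_ij = 1` implies
`m_ij = 1` for all `i, j`), then there exists a function `g` such that
`φ_H(x) = g(φ_M(x))` for every realization `x` of the chain; that is, the chain
filtered by `H` is a function of the chain filtered by `M`. -/
theorem statement_1 {k : ℕ} (M H : Fin k → Fin k → Bool)
    (hMH : ∀ i j, H i j = true → M i j = true) (n : ℕ) :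
    ∃ g : (Fin (n + 1) → Option (Fin k)) → (Fin (n + 1) → Option (Fin k)),
      ∀ x : Fin (n + 1) → Fin k, phi H x = g (phi M x) := by
  refine ⟨refilter H, fun x => ?_⟩
  rw [phi_eq_refilter_some_comp, phi_eq_refilter_some_comp, refilter_refilter hMH]

end FilteredMarkov
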